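/- Let L ∈ L_{2,2} be a quantum channel from 2×2 to 2×2 complex matrices with rank Z(L) ≤ 2, and suppose L is not unital, i.e. L(I_2) ≠ I_2. Then L is an extreme point of L_{2,2}. -/

import Mathlib

open Matrix
open scoped ComplexOrder

/-- The Choi matrix of a linear map `L` from `m × m` to `n × n` complex matrices:
its `((i,p),(j,q))` entry is the `(p,q)` entry of `L(E_{ij})`. -/
def choi (m n : ℕ) (L : Matrix (Fin m) (Fin m) ℂ →ₗ[ℂ] Matrix (Fin n) (Fin n) ℂ) :
    Matrix (Fin m × Fin n) (Fin m × Fin n) ℂ :=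
  Matrix.of fun ip jq => L (Matrix.single ip.1 jq.1 (1 : ℂ)) ip.2 jq.2

/-- `L` is a quantum channel: it admits a Kraus representation
`L(X) = ∑ Aᵢ X Aᵢ*` with `∑ Aᵢ* Aᵢ = I`. -/
def IsChannel (m n : ℕ) (L : Matrix (Fin m) (Fin m) ℂ →ₗ[ℂ] Matrix (Fin n) (Fin n) ℂ) : Prop :=
  ∃ (k : ℕ) (A : Fin k → Matrix (Fin n) (Fin m) ℂ),
    (∀ X, L X = ∑ i, A i * X * (A i)ᴴ) ∧ ∑ i, (A i)ᴴ * A i = 1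

/-- `L` is an extreme point of the convex set of quantum channels. -/
def IsExtremeChannel (m n : ℕ)
    (L : Matrix (Fin m) (Fin m) ℂ →ₗ[ℂ] Matrix (Fin n) (Fin n) ℂ) : Prop :=
  IsChannel m n L ∧
    ∀ L₁ L₂ : Matrix (Fin m) (Fin m) ℂ →ₗ[ℂ] Matrix (Fin n) (Fin n) ℂ,
      IsChannel m n L₁ → IsChannel m n L₂ → ∀ t : ℝ, 0 < t → t < 1 →
      L = (t : ℂ) • L₁ + ((1 - t : ℝ) : ℂ) • L₂ → L₁ = L ∧ L₂ = L

/-- The matrix whose vectorisation is the column `k` of `S`. -/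
def krausOfColumn {m n : ℕ} {κ : Type*} (S : Matrix (Fin m × Fin n) κ ℂ) (k : κ) :
    Matrix (Fin n) (Fin m) ℂ :=
  Matrix.of fun p i => S (i, p) k

lemma apply_eq_sum_krausOfColumn {m n : ℕ} {κ : Type*} [Fintype κ] [DecidableEq κ]
    {L : Matrix (Fin m) (Fin m) ℂ →ₗ[ℂ] Matrix (Fin n) (Fin n) ℂ}
    {S : Matrix (Fin m × Fin n) κ ℂ} {d : κ → ℂ}
    (h : choi m n L = S * diagonal d * Sᴴ) (X : Matrix (Fin m) (Fin m) ℂ) :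
    L X = ∑ k, d k • (krausOfColumn S k * X * (krausOfColumn S k)ᴴ) := by
  have entry : ∀ i j p q, L (Matrix.single i j 1) p q =
      ∑ k, S (i, p) k * d k * star (S (j, q) k) := by
    intro i j p q
    have := congrFun (congrFun h (i, p)) (j, q)
    rw [Matrix.mul_apply] at this
    simpa only [choi, of_apply, Matrix.mul_diagonal, Matrix.conjTranspose_apply] using this
  have expand : L X = ∑ i, ∑ j, X i j • L (Matrix.single i j 1) := by
    conv_lhs => rw [Matrix.matrix_eq_sum_single X]
    simp only [map_sum, ← map_smul, Matrix.smul_single, smul_eq_mul, mul_one]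
  ext p q
  rw [expand]
  simp only [Matrix.sum_apply, Matrix.smul_apply, entry, smul_eq_mul, Matrix.mul_apply,
    krausOfColumn, Matrix.of_apply, Matrix.conjTranspose_apply, Finset.mul_sum, Finset.sum_mul]
  rw [Finset.sum_comm]
  conv_rhs => rw [Finset.sum_comm]
  refine Finset.sum_congr rfl fun j _ => ?_
  conv_rhs => rw [Finset.sum_comm]
  refine Finset.sum_congr rfl fun i _ => Finset.sum_congr rfl fun k _ => ?_
  ring

lemma choi_injective (m n : ℕ) : Function.Injective (choi m n) := by
  intro L L' h
  refine Matrix.ext_linearMap ℂ fun i j => ?_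
  ext p q
  simpa [choi] using congrFun (congrFun h (i, p)) (j, q)

lemma IsChannel.trace_apply {m n : ℕ}
    {L : Matrix (Fin m) (Fin m) ℂ →ₗ[ℂ] Matrix (Fin n) (Fin n) ℂ} (hL : IsChannel m n L)
    (X : Matrix (Fin m) (Fin m) ℂ) : (L X).trace = X.trace := by
  obtain ⟨k, A, hA, hI⟩ := hL
  calc (L X).trace = ∑ i, ((A i)ᴴ * A i * X).trace := by
        rw [hA, Matrix.trace_sum]
        exact Finset.sum_congr rfl fun i _ => by rw [Matrix.trace_mul_comm, ← Matrix.mul_assoc]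
    _ = X.trace := by rw [← Matrix.trace_sum, ← Finset.sum_mul, hI, one_mul]

lemma IsChannel.posSemidef_choi {m n : ℕ}
    {L : Matrix (Fin m) (Fin m) ℂ →ₗ[ℂ] Matrix (Fin n) (Fin n) ℂ} (hL : IsChannel m n L) :
    (choi m n L).PosSemidef := by
  obtain ⟨k, A, hA, -⟩ := hL
  let T : Matrix (Fin m × Fin n) (Fin k) ℂ := Matrix.of fun ip l => A l ip.2 ip.1
  have : choi m n L = T * Tᴴ := by
    ext ⟨i, p⟩ ⟨j, q⟩
    simp [choi, hA, T, Matrix.sum_apply, Matrix.mul_apply, Matrix.single_apply, ite_and]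
  rw [this]
  exact Matrix.posSemidef_self_mul_conjTranspose T

/-- A full-rank factorisation of a positive semidefinite matrix. -/
lemma Matrix.PosSemidef.exists_factorization {n : Type*} [Fintype n] [DecidableEq n]
    {M : Matrix n n ℂ} (hM : M.PosSemidef) :
    ∃ S : Matrix n (Fin M.rank) ℂ, M = S * Sᴴ ∧ IsUnit (Sᴴ * S) := by
  let ev := hM.isHermitian.eigenvalues
  let U : Matrix n n ℂ := hM.isHermitian.eigenvectorUnitary
  let e : Fin M.rank ≃ {i // ev i ≠ 0} :=
    Fintype.equivOfCardEq (by
      rw [Fintype.card_fin, hM.isHermitian.rank_eq_card_non_zero_eigs])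
  let S : Matrix n (Fin M.rank) ℂ := Matrix.of fun i k => U i (e k) * (√(ev (e k)) : ℂ)
  have sqrt_mul : ∀ i, (√(ev i) : ℂ) * (√(ev i) : ℂ) = ev i := fun i => by
    exact_mod_cast Real.mul_self_sqrt (hM.eigenvalues_nonneg i)
  have hUU : Uᴴ * U = 1 := by
    simpa [U, Matrix.star_eq_conjTranspose] using
      Unitary.coe_star_mul_self hM.isHermitian.eigenvectorUnitary
  refine ⟨S, ?_, ?_⟩
  · have spec : M = U * diagonal (fun i => (ev i : ℂ)) * Uᴴ := by
      have := hM.isHermitian.spectral_theorem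
      simpa [Unitary.conjStarAlgAut_apply, U, Function.comp_def,
        Matrix.star_eq_conjTranspose] using this
    ext i j
    conv_lhs => rw [spec]
    rw [Matrix.mul_apply, Matrix.mul_apply]
    simp only [Matrix.mul_diagonal, Matrix.conjTranspose_apply, S, of_apply]
    rw [e.sum_comp (fun k : {i // ev i ≠ 0} =>
      U i k * (√(ev k) : ℂ) * star (U j k * (√(ev k) : ℂ)))]
    have hterm : ∀ k, U i k * (√(ev k) : ℂ) * star (U j k * (√(ev k) : ℂ)) =
        U i k * (ev k : ℂ) * star (U j k) := fun k => by
      rw [← sqrt_mul k]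
      simp only [star_mul', RCLike.star_def, Complex.conj_ofReal]
      ring
    simp only [hterm]
    rw [← Finset.sum_subtype (Finset.univ.filter fun k => ev k ≠ 0) (by simp)
      (fun k => U i k * (ev k : ℂ) * star (U j k)), Finset.sum_filter_of_ne]
    intro k _ hk hev
    simp [hev] at hk
  · have : Sᴴ * S = diagonal fun k => (ev (e k) : ℂ) := by
      ext k l
      have h := congrFun (congrFun hUU (e k)) (e l)
      rw [Matrix.mul_apply] at h
      calc (Sᴴ * S) k l
          = (√(ev (e k)) : ℂ) * (∑ i, Uᴴ (e k) i * U i (e l)) * (√(ev (e l)) : ℂ) := by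
            simp only [Matrix.mul_apply, Matrix.conjTranspose_apply, S, of_apply, star_mul',
              RCLike.star_def, Complex.conj_ofReal, Finset.mul_sum, Finset.sum_mul]
            exact Finset.sum_congr rfl fun i _ => by ring
        _ = _ := by
            rw [h, Matrix.one_apply, Matrix.diagonal_apply]
            by_cases hkl : k = l
            · simp [hkl, sqrt_mul]
            · simp [hkl, Subtype.val_inj]
    rw [this, Matrix.isUnit_diagonal, Pi.isUnit_iff]
    intro k
    simpa using (e k).2

/-- A matrix dominated by a positive semidefinite `S Sᴴ` is supported on the range of `S`. -/
lemma Matrix.PosSemidef.exists_eq_mul_mul_conjTranspose {n κ : Type*} [Fintype n] [DecidableEq n]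
    [Fintype κ] [DecidableEq κ] {N : Matrix n n ℂ} (hN : N.PosSemidef) {S : Matrix n κ ℂ}
    (hS : IsUnit (Sᴴ * S)) {c : ℂ} (hc : 0 < c) (hle : (S * Sᴴ - c • N).PosSemidef) :
    ∃ g : Matrix κ κ ℂ, g.IsHermitian ∧ N = S * g * Sᴴ := by
  set G := (Sᴴ * S)⁻¹ with hG
  have hdet : IsUnit (Sᴴ * S).det := (Matrix.isUnit_iff_isUnit_det _).1 hS
  have hGH : Gᴴ = G := by
    rw [hG, Matrix.conjTranspose_nonsing_inv, Matrix.conjTranspose_mul,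
      Matrix.conjTranspose_conjTranspose]
  set P := S * G * Sᴴ with hP
  have hPH : Pᴴ = P := by
    simp only [hP, Matrix.conjTranspose_mul, Matrix.conjTranspose_conjTranspose, hGH,
      Matrix.mul_assoc]
  have hSP : Sᴴ * (1 - P) = 0 := by
    rw [Matrix.mul_sub, Matrix.mul_one, hP, ← Matrix.mul_assoc, ← Matrix.mul_assoc, hG,
      Matrix.mul_nonsing_inv _ hdet, Matrix.one_mul, sub_self]
  have hker : ∀ x, Sᴴ *ᵥ x = 0 → N *ᵥ x = 0 := by
    intro x hx
    rw [← hN.dotProduct_mulVec_zero_iff]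
    have h1 := hle.dotProduct_mulVec_nonneg x
    rw [Matrix.sub_mulVec, ← Matrix.mulVec_mulVec, hx, Matrix.mulVec_zero, zero_sub,
      dotProduct_neg, Matrix.smul_mulVec, dotProduct_smul, smul_eq_mul] at h1
    have h2 := hN.dotProduct_mulVec_nonneg x
    have h3 : c * (star x ⬝ᵥ N *ᵥ x) = 0 :=
      le_antisymm (neg_nonneg.1 h1) (mul_nonneg hc.le h2)
    exact (mul_eq_zero.1 h3).resolve_left hc.ne'
  have hNP : N = N * P := by
    have : N * (1 - P) = 0 := by
      ext i j
      have h := hker ((1 - P).col j) (by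
        exact funext fun k => congrFun (congrFun hSP k) j)
      exact congrFun h i
    rwa [Matrix.mul_sub, Matrix.mul_one, sub_eq_zero] at this
  have hPN : N = P * N := by
    have := congrArg Matrix.conjTranspose hNP
    rwa [Matrix.conjTranspose_mul, hPH, hN.isHermitian.eq] at this
  refine ⟨G * Sᴴ * N * S * G, ?_, ?_⟩
  · simp only [Matrix.IsHermitian, Matrix.conjTranspose_mul, Matrix.conjTranspose_conjTranspose,
      hGH, hN.isHermitian.eq, Matrix.mul_assoc]
  · calc N = P * (N * P) := by rw [← hNP, ← hPN]
      _ = _ := by simp only [hP, Matrix.mul_assoc]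

lemma Matrix.mul_conjTranspose_eq_smul_one {n : Type*} [Fintype n] [DecidableEq n]
    {B : Matrix n n ℂ} {a : ℂ} (h : Bᴴ * B = a • (1 : Matrix n n ℂ)) :
    B * Bᴴ = a • (1 : Matrix n n ℂ) := by
  by_cases ha : a = 0
  · subst ha
    rw [zero_smul, Matrix.conjTranspose_mul_self_eq_zero] at h
    simp [h]
  · have h1 : (a⁻¹ • Bᴴ) * B = 1 := by
      rw [Matrix.smul_mul, h, smul_smul, inv_mul_cancel₀ ha, one_smul]
    have h2 := mul_eq_one_comm.1 h1
    rw [Matrix.mul_smul] at h2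
    rw [← h2, smul_smul, mul_inv_cancel₀ ha, one_smul]

/-- If the Gram matrices of at most two square matrices sum to `1` and satisfy a weighted relation
with non-constant weights, then both are multiples of unitaries. -/
lemma sum_mul_conjTranspose_eq_one {n κ : Type*} [Fintype n] [DecidableEq n]
    [Fintype κ] (hκ : Fintype.card κ ≤ 2) {B : κ → Matrix n n ℂ}
    {d : κ → ℂ} (hone : ∑ k, (B k)ᴴ * B k = 1)
    (hd : ∑ k, d k • ((B k)ᴴ * B k) = 1) {i j : κ} (hij : d i ≠ d j) :
    ∑ k, B k * (B k)ᴴ = 1 := by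
  classical
  have hne : i ≠ j := fun h => hij (h ▸ rfl)
  have huniv : (Finset.univ : Finset κ) = {i, j} :=
    (Finset.eq_of_subset_of_card_le (Finset.subset_univ _) (by
      rw [Finset.card_pair hne, Finset.card_univ]; exact hκ)).symm
  have hsub : d i - d j ≠ 0 := sub_ne_zero.2 hij
  rw [huniv, Finset.sum_pair hne] at hone hd ⊢
  have hi : (B i)ᴴ * B i = ((1 - d j) / (d i - d j)) • (1 : Matrix n n ℂ) := by
    rw [div_eq_inv_mul, mul_smul, eq_inv_smul_iff₀ hsub]
    linear_combination (norm := module) hd - d j • hone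
  have hj : (B j)ᴴ * B j = ((d i - 1) / (d i - d j)) • (1 : Matrix n n ℂ) := by
    rw [div_eq_inv_mul, mul_smul, eq_inv_smul_iff₀ hsub]
    linear_combination (norm := module) d i • hone - hd
  rw [Matrix.mul_conjTranspose_eq_smul_one hi, Matrix.mul_conjTranspose_eq_smul_one hj,
    ← add_smul, ← add_div, show 1 - d j + (d i - 1) = d i - d j by ring, div_self hsub, one_smul]

lemma IsChannel.sum_krausOfColumn {m n : ℕ} {κ : Type*} [Fintype κ] [DecidableEq κ]
    {L : Matrix (Fin m) (Fin m) ℂ →ₗ[ℂ] Matrix (Fin n) (Fin n) ℂ} (hL : IsChannel m n L)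
    {S : Matrix (Fin m × Fin n) κ ℂ} {d : κ → ℂ}
    (h : choi m n L = S * diagonal d * Sᴴ) :
    ∑ k, d k • ((krausOfColumn S k)ᴴ * krausOfColumn S k) = 1 := by
  refine Matrix.ext_iff_trace_mul_right.2 fun X => ?_
  rw [one_mul, ← hL.trace_apply X, apply_eq_sum_krausOfColumn h, Finset.sum_mul,
    Matrix.trace_sum, Matrix.trace_sum]
  refine Finset.sum_congr rfl fun k _ => ?_
  rw [Matrix.smul_mul, Matrix.trace_smul, Matrix.trace_smul,
    Matrix.trace_mul_comm (krausOfColumn S k * X), ← Matrix.mul_assoc]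

/-- A channel dominated by a non-unital channel of Choi rank at most two coincides with it. -/
lemma IsChannel.eq_of_dominated {n : ℕ}
    {L L₁ : Matrix (Fin n) (Fin n) ℂ →ₗ[ℂ] Matrix (Fin n) (Fin n) ℂ}
    (hL : IsChannel n n L) (hrank : (choi n n L).rank ≤ 2) (hunital : L 1 ≠ 1)
    (hL₁ : IsChannel n n L₁) {c : ℂ} (hc : 0 < c)
    (hle : (choi n n L - c • choi n n L₁).PosSemidef) : L₁ = L := by
  obtain ⟨S, hS, hunit⟩ := hL.posSemidef_choi.exists_factorization
  rw [hS] at hle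
  obtain ⟨g, hg, hN⟩ := hL₁.posSemidef_choi.exists_eq_mul_mul_conjTranspose hunit hc hle
  let U : Matrix (Fin (choi n n L).rank) (Fin (choi n n L).rank) ℂ := hg.eigenvectorUnitary
  let d : Fin (choi n n L).rank → ℂ := fun k => hg.eigenvalues k
  have hUU : U * Uᴴ = 1 := by
    simpa [U, Matrix.star_eq_conjTranspose] using
      Unitary.coe_mul_star_self hg.eigenvectorUnitary
  have spec : g = U * diagonal d * Uᴴ := by
    simpa [Unitary.conjStarAlgAut_apply, U, d, Function.comp_def,
      Matrix.star_eq_conjTranspose] using hg.spectral_theorem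
  have hWW : (S * U) * (S * U)ᴴ = S * Sᴴ := by
    rw [Matrix.conjTranspose_mul, Matrix.mul_assoc, ← Matrix.mul_assoc U, hUU, Matrix.one_mul]
  have hWdW : (S * U) * diagonal d * (S * U)ᴴ = S * g * Sᴴ := by
    rw [spec, Matrix.conjTranspose_mul]
    simp only [Matrix.mul_assoc]
  generalize S * U = W at hWW hWdW
  have hM : choi n n L = W * diagonal (fun _ : Fin (choi n n L).rank => (1 : ℂ)) * Wᴴ := by
    rw [Matrix.diagonal_one, Matrix.mul_one, hWW]
    exact hS
  have hN' : choi n n L₁ = W * diagonal d * Wᴴ := hN.trans hWdW.symm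
  have hone := hL.sum_krausOfColumn hM
  have hd := hL₁.sum_krausOfColumn hN'
  simp only [one_smul] at hone
  by_cases hconst : ∀ i j, d i = d j
  · have : Nontrivial (Matrix (Fin n) (Fin n) ℂ) := ⟨_, _, hunital⟩
    have hd_one : d = fun _ => 1 := by
      ext k
      simp only [hconst _ k] at hd
      rw [← Finset.smul_sum, hone] at hd
      exact smul_left_injective ℂ one_ne_zero (hd.trans (one_smul ℂ _).symm)
    exact choi_injective n n ((hd_one ▸ hN').trans hM.symm)
  · push Not at hconst
    obtain ⟨i, j, hij⟩ := hconst
    refine absurd ?_ hunital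
    rw [apply_eq_sum_krausOfColumn hM]
    simpa using sum_mul_conjTranspose_eq_one (by simpa using hrank) hone hd hij

/-- a non-unital channel `L ∈ L_{2,2}` with `rank Z(L) ≤ 2` is an extreme point
of `L_{2,2}`. -/
theorem stmt19 (L : Matrix (Fin 2) (Fin 2) ℂ →ₗ[ℂ] Matrix (Fin 2) (Fin 2) ℂ)
    (hL : IsChannel 2 2 L) (hrank : (choi 2 2 L).rank ≤ 2)
    (hunital : L 1 ≠ 1) :
    IsExtremeChannel 2 2 L := by
  refine ⟨hL, fun L₁ L₂ h₁ h₂ t ht ht' h => ?_⟩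
  have hc₁ : (0 : ℂ) < (t : ℂ) := by exact_mod_cast ht
  have hc₂ : (0 : ℂ) < ((1 - t : ℝ) : ℂ) := by exact_mod_cast sub_pos.2 ht'
  have hchoi : choi 2 2 L =
      (t : ℂ) • choi 2 2 L₁ + ((1 - t : ℝ) : ℂ) • choi 2 2 L₂ := by
    rw [h]
    ext
    simp [choi]
  constructor
  · refine hL.eq_of_dominated hrank hunital h₁ hc₁ ?_
    rw [hchoi, add_sub_cancel_left]
    exact h₂.posSemidef_choi.smul hc₂.le
  · refine hL.eq_of_dominated hrank hunital h₂ hc₂ ?_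
    rw [hchoi, add_sub_cancel_right]
    exact h₁.posSemidef_choi.smul hc₁.le
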